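/- arXiv:2502.09453 — 3 statements merged into one kernel-verified Lean document; each statement's English description precedes it below -/
import Mathlib

section
/- Let G be a connected finite simple graph. If there exists a subtree T of G with k leaves and an interior (non-leaf) vertex u of T such that every pair of distinct leaves of T can be connected by a path in G that contains neither u nor any other leaf of T, then VCD(C_con(G)) ≥ k + 1; in fact, the set consisting of u together with the k leaves of T is shattered by C_con(G). -/
open scoped Classical

noncomputable section

/-! ### Concept classes, VC-dimension, teaching dimension, RTD -/

variable {X : Type*}

/-- A set `S` is shattered by the concept class `𝒞` if every subset of `S`
is the trace on `S` of some concept in `𝒞`. -/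
def Shatters [DecidableEq X] (𝒞 : Finset (Finset X)) (S : Finset X) : Prop :=
  ∀ S' ⊆ S, ∃ C ∈ 𝒞, C ∩ S = S'

/-- The VC-dimension of a concept class: the maximum size of a shattered set. -/
def VCD [DecidableEq X] (𝒞 : Finset (Finset X)) : ℕ :=
  sSup {n | ∃ S : Finset X, Shatters 𝒞 S ∧ S.card = n}

/-- `D` is a teaching set for the concept `C` within the class `𝒞`:
no other concept of `𝒞` agrees with `C` on all of `D`. -/
def IsTeachingSet [DecidableEq X] (𝒞 : Finset (Finset X)) (C D : Finset X) : Prop :=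
  ∀ C' ∈ 𝒞, C' ≠ C → ∃ x ∈ D, ¬ ((x ∈ C') ↔ (x ∈ C))

/-- The teaching dimension of the concept `C` within the class `𝒞`:
the minimum size of a teaching set for `C` in `𝒞`. -/
def TD [DecidableEq X] (𝒞 : Finset (Finset X)) (C : Finset X) : ℕ :=
  sInf {n | ∃ D : Finset X, IsTeachingSet 𝒞 C D ∧ D.card = n}

/-- The minimum teaching dimension over all concepts of the class. -/
def TDmin [DecidableEq X] (𝒞 : Finset (Finset X)) : ℕ :=
  sInf {n | ∃ C ∈ 𝒞, TD 𝒞 C = n}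

/-- The recursive teaching dimension: with `𝒞_min` the set of concepts of `𝒞` whose
teaching dimension equals `TDmin 𝒞`, we have `RTD 𝒞 = TDmin 𝒞` if `𝒞 = 𝒞_min`
and `RTD 𝒞 = max (TDmin 𝒞) (RTD (𝒞 \ 𝒞_min))` otherwise. -/
def RTD [DecidableEq X] (𝒞 : Finset (Finset X)) : ℕ :=
  if h : 𝒞 = 𝒞.filter (fun C => TD 𝒞 C = TDmin 𝒞) then TDmin 𝒞
  else max (TDmin 𝒞) (RTD (𝒞 \ 𝒞.filter (fun C => TD 𝒞 C = TDmin 𝒞)))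
termination_by 𝒞.card
decreasing_by
  have hne : 𝒞.Nonempty := by
    rcases Finset.eq_empty_or_nonempty 𝒞 with he | hne
    · exact absurd (by simp [he]) h
    · exact hne
  obtain ⟨C₀, hC₀⟩ := hne
  have hmem : TDmin 𝒞 ∈ {n | ∃ C ∈ 𝒞, TD 𝒞 C = n} :=
    Nat.sInf_mem ⟨TD 𝒞 C₀, C₀, hC₀, rfl⟩
  obtain ⟨C, hC, hTD⟩ := hmem
  refine Finset.card_lt_card ?_
  refine (Finset.ssubset_iff_of_subset Finset.sdiff_subset).mpr ?_
  exact ⟨C, hC, by simp [Finset.mem_sdiff, Finset.mem_filter, hC, hTD]⟩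

/-! ### Graph-theoretic notions -/

/-- The degree of a vertex in a graph on a finite vertex type. -/
def deg {W : Type*} [Fintype W] (T : SimpleGraph W) (v : W) : ℕ :=
  (Finset.univ.filter (fun w => T.Adj v w)).card

/-- A leaf of a graph (in particular, of a tree) is a vertex of degree 1. -/
def IsLeaf {W : Type*} [Fintype W] (T : SimpleGraph W) (v : W) : Prop :=
  deg T v = 1

/-- The number of leaves of a graph (in particular, of a tree). -/
def leafCount {W : Type*} [Fintype W] (T : SimpleGraph W) : ℕ :=
  (Finset.univ.filter (fun v => IsLeaf T v)).card

variable {V : Type*} [Fintype V] [DecidableEq V]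

/-- The open neighborhood of a vertex, as a finset. -/
def nbrFinset (G : SimpleGraph V) (x : V) : Finset V :=
  Finset.univ.filter (fun y => G.Adj x y)

/-- The closed neighborhood of a vertex, as a finset. -/
def closedNbr (G : SimpleGraph V) (x : V) : Finset V :=
  insert x (nbrFinset G x)

/-- The maximum degree `Δ(G)`. -/
def maxDeg (G : SimpleGraph V) : ℕ :=
  Finset.univ.sup (deg G)

/-- The closed neighborhood of a set of vertices. -/
def closedNbrSet (G : SimpleGraph V) (A : Finset V) : Finset V :=
  A.biUnion (closedNbr G)

/-- The open neighborhood of a set of vertices: `N_G(A) \ A`. -/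
def openNbrSet (G : SimpleGraph V) (A : Finset V) : Finset V :=
  closedNbrSet G A \ A

/-- The star class of `G`: all sets `{x} ∪ X` with `X` a set of neighbors of `x`. -/
def Cstar (G : SimpleGraph V) : Finset (Finset V) :=
  Finset.univ.filter (fun C => ∃ x : V, ∃ Y ⊆ nbrFinset G x, C = insert x Y)

/-- `A` is a connected set of `G`: the induced subgraph `G[A]` is connected. -/
def IsConnSet (G : SimpleGraph V) (A : Finset V) : Prop :=
  (G.induce (A : Set V)).Connected

/-- The class of connected sets of `G` (including the empty set). -/
def Ccon (G : SimpleGraph V) : Finset (Finset V) :=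
  Finset.univ.filter (fun A => A = ∅ ∨ IsConnSet G A)

/-- For connected `G`: the maximum number of leaves over all spanning trees of `G`. -/
def ell (G : SimpleGraph V) : ℕ :=
  sSup {k | ∃ T : SimpleGraph V, T ≤ G ∧ T.IsTree ∧ leafCount T = k}

/-- For a general graph `G`: the maximum of `ell` over the connected components of `G`. -/
def ellGen (G : SimpleGraph V) : ℕ :=
  sSup {k | ∃ c : G.ConnectedComponent, ell (G.induce c.supp) = k}

/-- Every pair of distinct elements of `L` can be connected by a path in `G` which
contains neither `u` nor any element of `L` other than the two endpoints. -/
def ConnectableAvoiding (G : SimpleGraph V) (L : Set V) (u : V) : Prop :=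
  ∀ a ∈ L, ∀ b ∈ L, a ≠ b → ∃ p : G.Walk a b, p.IsPath ∧
    ∀ v ∈ p.support, v ≠ u ∧ (v ∈ L → v = a ∨ v = b)

end

/-!
A subset `S'` of `S` is the trace on `S` of a connected set as soon as some `r ∈ S'` can be joined
to every other vertex of `S'` by a walk avoiding `S \ S'`: take the union of these walks. Let `S`
consist of `u` and the leaves of `T`. If `u ∈ S'`, start at `r = u` and walk inside `T`, where a
path meets leaves only at its ends. If `u ∉ S'`, start at any leaf in `S'` and use the paths in `G`
that avoid `u` and the remaining leaves.
-/

section Shattering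

variable {X : Type*} [DecidableEq X] {𝒞 : Finset (Finset X)} {S : Finset X}

theorem shatters_iff_finset_shatters : Shatters 𝒞 S ↔ 𝒞.Shatters S := by
  simp only [Shatters, Finset.Shatters, Finset.inter_comm S]

theorem Shatters.card_le_VCD (hS : Shatters 𝒞 S) : S.card ≤ VCD 𝒞 := by
  refine le_csSup ⟨𝒞.vcDim, ?_⟩ ⟨S, hS, rfl⟩
  rintro _ ⟨S', hS', rfl⟩
  exact (shatters_iff_finset_shatters.mp hS').card_le_vcDim

end Shattering

section Leaves

variable {W : Type*} [Fintype W] {T : SimpleGraph W} {u v w : W}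

theorem IsLeaf.subsingleton_neighborSet (hv : IsLeaf T v) : (T.neighborSet v).Subsingleton := by
  intro x hx y hy
  exact Finset.card_le_one.mp hv.le x (by simpa using hx) y (by simpa using hy)

theorem IsLeaf.eq_end_of_mem_support {p : T.Walk u v} (hw : IsLeaf T w) (hp : p.IsTrail)
    (hu : ¬ IsLeaf T u) (hwp : w ∈ p.support) : w = v := by
  by_contra hwv
  have hwu : w ≠ u := fun h => hu (h ▸ hw)
  exact hp.not_mem_support_of_subsingleton_neighborSet hwu hwv hw.subsingleton_neighborSet hwp

end Leaves

section ConnectedSets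

variable {V : Type*} {G : SimpleGraph V}

theorem isConnSet_biUnion_support [DecidableEq V] {ι : Type*} {I : Finset ι} (hI : I.Nonempty)
    {r : V} {v : ι → V} (p : ∀ i, G.Walk r (v i)) :
    IsConnSet G (I.biUnion fun i => (p i).support.toFinset) := by
  refine G.induce_connected_of_patches r ?_ fun {x} hx => ?_
  · simpa [Finset.Nonempty] using hI
  · obtain ⟨i, hi, hxi⟩ : ∃ i ∈ I, x ∈ (p i).support := by simpa using hx
    refine ⟨{y | y ∈ (p i).support}, fun y hy => ?_, (p i).start_mem_support, hxi,
      (p i).connected_induce_support _ _⟩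
    simpa using ⟨i, hi, hy⟩

theorem exists_isConnSet_between {r : V} {A : Finset V} {B : Set V} (hr : r ∈ A)
    (hwalk : ∀ v ∈ A, ∃ p : G.Walk r v, ∀ w ∈ p.support, w ∈ B) :
    ∃ C, IsConnSet G C ∧ A ⊆ C ∧ ↑C ⊆ B := by
  choose p hp using hwalk
  refine ⟨_, isConnSet_biUnion_support (Finset.attach_nonempty_iff.mpr ⟨r, hr⟩)
    fun v : A => p v v.2, fun v hv => ?_, fun w hw => ?_⟩
  · exact Finset.mem_biUnion.mpr
      ⟨⟨v, hv⟩, Finset.mem_attach _ _, List.mem_toFinset.mpr (p v hv).end_mem_support⟩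
  · obtain ⟨v, -, hwv⟩ := Finset.mem_biUnion.mp (Finset.mem_coe.mp hw)
    exact hp v v.2 w (List.mem_toFinset.mp hwv)

variable [Fintype V] [DecidableEq V]

theorem mem_Ccon {A : Finset V} : A ∈ Ccon G ↔ A = ∅ ∨ IsConnSet G A := by
  simp [Ccon]

theorem exists_mem_Ccon_inter_eq {r : V} {S S' : Finset V} (hS' : S' ⊆ S) (hr : r ∈ S')
    (hwalk : ∀ v ∈ S', v ≠ r → ∃ p : G.Walk r v, ∀ w ∈ p.support, w ∈ S → w ∈ S') :
    ∃ C ∈ Ccon G, C ∩ S = S' := by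
  have hwalk' : ∀ v ∈ S', ∃ p : G.Walk r v, ∀ w ∈ p.support, w ∈ {x | x ∈ S → x ∈ S'} := by
    intro v hv
    obtain rfl | hvr := eq_or_ne v r
    · exact ⟨.nil, by simp [hr]⟩
    · exact hwalk v hv hvr
  obtain ⟨C, hC, hS'C, hCS⟩ := exists_isConnSet_between hr hwalk'
  refine ⟨C, mem_Ccon.mpr (.inr hC), (Finset.subset_inter hS'C hS').antisymm' fun v hv => ?_⟩
  obtain ⟨hvC, hvS⟩ := Finset.mem_inter.mp hv
  exact hCS hvC hvS

theorem shatters_Ccon_insert {L : Finset V} {u : V}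
    (hu : ∀ a ∈ L, ∃ p : G.Walk u a, ∀ w ∈ p.support, w ∈ L → w = a)
    (hL : ConnectableAvoiding G L u) : Shatters (Ccon G) (insert u L) := by
  intro S' hS'
  have mem_L {a : V} (ha : a ∈ S') (hau : a ≠ u) : a ∈ L :=
    Finset.mem_of_mem_insert_of_ne (hS' ha) hau
  by_cases huS' : u ∈ S'
  · refine exists_mem_Ccon_inter_eq hS' huS' fun a ha hau => ?_
    obtain ⟨p, hp⟩ := hu a (mem_L ha hau)
    refine ⟨p, fun w hw hwS => ?_⟩
    obtain rfl | hwL := Finset.mem_insert.mp hwS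
    · exact huS'
    · exact hp w hw hwL ▸ ha
  · obtain rfl | ⟨r, hr⟩ := S'.eq_empty_or_nonempty
    · exact ⟨∅, mem_Ccon.mpr (.inl rfl), Finset.empty_inter _⟩
    have mem_L' {a : V} (ha : a ∈ S') : a ∈ L := mem_L ha (ne_of_mem_of_not_mem ha huS')
    refine exists_mem_Ccon_inter_eq hS' hr fun a ha har => ?_
    obtain ⟨p, -, hp⟩ := hL r (mem_L' hr) a (mem_L' ha) har.symm
    refine ⟨p, fun w hw hwS => ?_⟩
    obtain ⟨hwu, hw_end⟩ := hp w hw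
    obtain rfl | rfl := hw_end (Finset.mem_of_mem_insert_of_ne hwS hwu)
    · exact hr
    · exact ha

end ConnectedSets

section SubgraphLeaves

variable {V : Type*} [Fintype V] [DecidableEq V] {G : SimpleGraph V} {s : Set V}
  {T : SimpleGraph s} {u : s}

/-- The leaves of a graph `T` on a subset `s` of `V`, as vertices of the ambient type `V`. -/
noncomputable def leafFinset (T : SimpleGraph s) : Finset V :=
  (Finset.univ.filter (fun v : s => IsLeaf T v)).image Subtype.val

theorem coe_leafFinset : (leafFinset T : Set V) = Subtype.val '' {v : s | IsLeaf T v} := by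
  simp [leafFinset]

theorem coe_mem_leafFinset : (u : V) ∈ leafFinset T ↔ IsLeaf T u := by
  simp [leafFinset]

theorem card_leafFinset : (leafFinset T).card = leafCount T :=
  Finset.card_image_of_injective _ Subtype.val_injective

theorem exists_walk_avoiding_leaves (hsub : T ≤ G.induce s) (hT : T.Preconnected)
    (hu : ¬ IsLeaf T u) (v : s) :
    ∃ p : G.Walk u v, ∀ w ∈ p.support, w ∈ leafFinset T → w = v := by
  obtain ⟨p, hp⟩ := hT.exists_isPath u v
  let ι : T →g G := (SimpleGraph.Embedding.induce s).toHom.comp (.ofLE hsub)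
  refine ⟨p.map ι, fun w hw hwL => ?_⟩
  obtain ⟨x, hx, rfl⟩ := List.mem_map.mp (SimpleGraph.Walk.support_map ι p ▸ hw)
  exact congrArg ι ((coe_mem_leafFinset.mp hwL).eq_end_of_mem_support hp.isTrail hu hx)

theorem con_vcd_lower_of_subtree_general (hsub : T ≤ G.induce s) (hT : T.Preconnected)
    (hu : ¬ IsLeaf T u) (hpaths : ConnectableAvoiding G (leafFinset T) u) :
    Shatters (Ccon G) (insert ↑u (leafFinset T)) ∧ leafCount T + 1 ≤ VCD (Ccon G) := by
  have hshat : Shatters (Ccon G) (insert ↑u (leafFinset T)) := by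
    refine shatters_Ccon_insert (fun a ha => ?_) hpaths
    obtain ⟨v, -, rfl⟩ := Finset.mem_image.mp ha
    exact exists_walk_avoiding_leaves hsub hT hu v
  refine ⟨hshat, ?_⟩
  calc leafCount T + 1 = (insert ↑u (leafFinset T)).card := by
        rw [Finset.card_insert_of_notMem (coe_mem_leafFinset.not.mpr hu), card_leafFinset]
    _ ≤ VCD (Ccon G) := hshat.card_le_VCD

end SubgraphLeaves

/-- If a connected finite simple graph `G` has a subtree `T` with
`k` leaves and an interior vertex `u` such that every pair of distinct leaves of `T`
can be connected by a path in `G` containing neither `u` nor any other leaf of `T`,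
then the set consisting of `u` and the `k` leaves of `T` is shattered by `C_con(G)`;
in particular `VCD(C_con(G)) ≥ k + 1`. -/
theorem con_vcd_lower_of_subtree {V : Type*} [Fintype V] [DecidableEq V]
    (G : SimpleGraph V) (hconn : G.Connected)
    (s : Set V) (T : SimpleGraph s) (hsub : T ≤ G.induce s) (htree : T.IsTree)
    (k : ℕ) (hk : leafCount T = k)
    (u : s) (hu : ¬ IsLeaf T u)
    (hpaths : ConnectableAvoiding G (Subtype.val '' {v : s | IsLeaf T v}) ↑u) :
    Shatters (Ccon G)
        (insert (↑u) ((Finset.univ.filter (fun v : s => IsLeaf T v)).image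
          (Subtype.val : s → V))) ∧
      k + 1 ≤ VCD (Ccon G) := by
  subst hk
  exact con_vcd_lower_of_subtree_general hsub htree.connected.preconnected hu
    (by rwa [coe_leafFinset])
end

section
/- For every connected finite simple graph G = (V,E) and every nonempty connected set X of G, there exists a spanning tree of the induced subgraph G[N_G(X)] that has all vertices of N°_G(X) among its leaves. -/
open scoped Classical

/-!
Choose for every vertex `v` outside the connected set one neighbour `f v` inside it, and delete
all other edges leaving the outside vertices. The remaining graph is still connected, so it has a
spanning tree. In that tree an outside vertex `v` can only be adjacent to `f v`, and by
connectedness it is.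
-/

theorem isLeaf_iff_existsUnique_adj {W : Type*} [Fintype W] {T : SimpleGraph W} {v : W} :
    IsLeaf T v ↔ ∃! w, T.Adj v w := by
  simp only [IsLeaf, deg, Finset.card_eq_one, Finset.singleton_iff_unique_mem, Finset.mem_filter,
    Finset.mem_univ, true_and]

section Neighborhoods

variable {V : Type*} [Fintype V] [DecidableEq V] {G : SimpleGraph V} {A : Finset V} {v : V}

theorem mem_closedNbrSet : v ∈ closedNbrSet G A ↔ v ∈ A ∨ ∃ x ∈ A, G.Adj v x := by
  simp only [closedNbrSet, closedNbr, nbrFinset, Finset.mem_biUnion, Finset.mem_insert,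
    Finset.mem_filter, Finset.mem_univ, true_and, and_or_left, exists_or, exists_eq_right',
    G.adj_comm v]

theorem subset_closedNbrSet : A ⊆ closedNbrSet G A :=
  fun _ hv => mem_closedNbrSet.2 (.inl hv)

theorem exists_adj_of_mem_closedNbrSet (hv : v ∈ closedNbrSet G A) (hvA : v ∉ A) :
    ∃ x ∈ A, G.Adj v x :=
  (mem_closedNbrSet.1 hv).resolve_left hvA

theorem notMem_of_mem_openNbrSet (hv : v ∈ openNbrSet G A) : v ∉ A :=
  (Finset.mem_sdiff.1 hv).2

end Neighborhoods

section Connectivity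

variable {V W : Type*}

theorem connected_of_forall_mem_range_or_adj {K : SimpleGraph W} {H : SimpleGraph V} (φ : K →g H)
    (hK : K.Connected) (hφ : ∀ v, v ∈ Set.range φ ∨ ∃ x, H.Adj (φ x) v) : H.Connected := by
  obtain ⟨root⟩ := hK.nonempty
  have reachable_image (x : W) : H.Reachable (φ root) (φ x) := (hK.preconnected root x).map φ
  refine (SimpleGraph.connected_iff_exists_forall_reachable H).2 ⟨φ root, fun v => ?_⟩
  rcases hφ v with ⟨x, rfl⟩ | ⟨x, hadj⟩
  · exact reachable_image x
  · exact (reachable_image x).trans hadj.reachable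

theorem connected_induce_preimage_val {G : SimpleGraph V} {s t : Set V} (hst : s ⊆ t)
    (hs : (G.induce s).Connected) : ((G.induce t).induce (Subtype.val ⁻¹' s)).Connected := by
  let inclusion : G.induce s →g (G.induce t).induce (Subtype.val ⁻¹' s) :=
    { toFun := fun x => ⟨⟨x, hst x.2⟩, x.2⟩, map_rel' := id }
  exact hs.map inclusion fun y => ⟨⟨y, y.2⟩, rfl⟩

theorem existsUnique_adj_of_forall_adj_eq {T : SimpleGraph V} {u v : V} (hT : T.Preconnected)
    (huv : u ≠ v) (honly : ∀ w, T.Adj v w → w = u) : ∃! w, T.Adj v w := by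
  have : Nontrivial V := ⟨u, v, huv⟩
  obtain ⟨w, hw⟩ := hT.exists_adj_of_nontrivial v
  exact ⟨w, hw, fun w' hw' => (honly w' hw').trans (honly w hw).symm⟩

end Connectivity

section PendantExtension

variable {V : Type*} {G : SimpleGraph V} {s : Set V} {f : V → V}

/-- The induced subgraph `G[s]` together with the edge `{v, f v}` for each vertex `v` outside `s`.
When `f` maps the complement of `s` into `s`, this attaches every vertex outside `s` to `s` as a
pendant vertex. To avoid subtypes `f` is total, but only its values outside `s` matter. -/
def pendantExtension (G : SimpleGraph V) (s : Set V) (f : V → V) : SimpleGraph V :=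
  (G.induce s).spanningCoe ⊔ SimpleGraph.fromRel fun v w => v ∉ s ∧ w = f v

theorem pendantExtension_le (hf : ∀ v ∉ s, G.Adj v (f v)) : pendantExtension G s f ≤ G := by
  refine sup_le (G.spanningCoe_induce_le s) ?_
  rintro v w ⟨-, ⟨hv, rfl⟩ | ⟨hw, rfl⟩⟩
  · exact hf v hv
  · exact (hf w hw).symm

theorem eq_of_pendantExtension_adj (hf : ∀ v ∉ s, f v ∈ s) {v w : V} (hv : v ∉ s)
    (hadj : (pendantExtension G s f).Adj v w) : w = f v := by
  rcases hadj with hind | ⟨-, ⟨-, hw⟩ | ⟨hw, rfl⟩⟩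
  · obtain ⟨-, x, -, -, rfl, -⟩ := hind
    exact absurd x.2 hv
  · exact hw
  · exact absurd (hf w hw) hv

theorem pendantExtension_connected (hs : (G.induce s).Connected) (hf : ∀ v ∉ s, f v ∈ s) :
    (pendantExtension G s f).Connected := by
  let inclusion : G.induce s →g pendantExtension G s f :=
    (SimpleGraph.Hom.ofLE le_sup_left).comp (SimpleGraph.Embedding.spanningCoe _).toHom
  refine connected_of_forall_mem_range_or_adj inclusion hs fun v => ?_
  by_cases hv : v ∈ s
  · exact .inl ⟨⟨v, hv⟩, rfl⟩
  · have hne : f v ≠ v := ne_of_mem_of_not_mem (hf v hv) hv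
    exact .inr ⟨⟨f v, hf v hv⟩, .inr ⟨hne, .inr ⟨hv, rfl⟩⟩⟩

end PendantExtension

theorem exists_isTree_le_existsUnique_adj_of_dominating {V : Type*} {G : SimpleGraph V} {s : Set V}
    (hs : (G.induce s).Connected) (hdom : ∀ v ∉ s, ∃ x ∈ s, G.Adj v x) :
    ∃ T ≤ G, T.IsTree ∧ ∀ v ∉ s, ∃! w, T.Adj v w := by
  choose! f hfs hfadj using hdom
  obtain ⟨T, hT, htree⟩ := (pendantExtension_connected hs hfs).exists_isTree_le
  refine ⟨T, hT.trans (pendantExtension_le hfadj), htree, fun v hv => ?_⟩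
  exact existsUnique_adj_of_forall_adj_eq htree.connected.preconnected (hfadj v hv).ne'
    fun w hw => eq_of_pendantExtension_adj hfs hv (hT hw)

theorem spanning_tree_of_closed_nbr_general {V : Type*} (G : SimpleGraph V) {s t : Set V}
    (hs : (G.induce s).Connected) (hst : s ⊆ t) (hdom : ∀ v ∈ t, v ∉ s → ∃ x ∈ s, G.Adj v x) :
    ∃ T : SimpleGraph t, T ≤ G.induce t ∧ T.IsTree ∧ ∀ v : t, ↑v ∉ s → ∃! w, T.Adj v w := by
  refine exists_isTree_le_existsUnique_adj_of_dominating (connected_induce_preimage_val hst hs) ?_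
  intro v hv
  obtain ⟨x, hx, hadj⟩ := hdom v v.2 hv
  exact ⟨⟨x, hst hx⟩, hx, hadj⟩

/-- For every connected finite simple graph `G` and every nonempty
connected set `X` of `G`, there is a spanning tree of the induced subgraph `G[N_G(X)]`
all of whose vertices from `N°_G(X)` are leaves. -/
theorem spanning_tree_of_closed_nbr {V : Type*} [Fintype V] [DecidableEq V]
    (G : SimpleGraph V) (hconn : G.Connected)
    (Xs : Finset V) (hne : Xs.Nonempty) (hX : IsConnSet G Xs) :
    ∃ T : SimpleGraph ((closedNbrSet G Xs : Set V) : Type _),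
      T ≤ G.induce (closedNbrSet G Xs : Set V) ∧ T.IsTree ∧
        ∀ v : (closedNbrSet G Xs : Set V), (↑v : V) ∈ openNbrSet G Xs → IsLeaf T v := by
  obtain ⟨T, hle, htree, hleaf⟩ := spanning_tree_of_closed_nbr_general G hX subset_closedNbrSet
    fun _ => exists_adj_of_mem_closedNbrSet
  exact ⟨T, hle, htree, fun v hv =>
    isLeaf_iff_existsUnique_adj.2 (hleaf v (notMem_of_mem_openNbrSet hv))⟩
end

section
/- Let 𝒞_1,…,𝒞_r be nonempty concept classes over pairwise disjoint finite domains 𝒳_1,…,𝒳_r, and let 𝒞 = 𝒞_1 ∪ … ∪ 𝒞_r be regarded as a concept class over the domain 𝒳_1 ∪ … ∪ 𝒳_r. Then max_{i=1,…,r} RTD(𝒞_i) ≤ RTD(𝒞) ≤ 1 + max_{i=1,…,r} RTD(𝒞_i). -/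
open scoped Classical

/-!
The recursive teaching dimension of `𝒞` is the largest `TDmin` of a subclass of `𝒞`: the first
stage of the recursion that removes a concept of a subclass `𝓕` teaches that concept within a class
containing `𝓕`. Monotonicity of `RTD` is immediate, and it gives the lower bound. For the upper
bound, let `𝓕` be a subclass of the union that contains a nonempty concept of `𝒞 i`. The nonempty
concepts of `𝓕` in `𝒞 i` form a subclass of `𝒞 i`, so one of them, `C`, has a teaching set of size
at most `RTD (𝒞 i)` among them. Adding a point of `C` to that set rules out the empty concept and,
the domains being disjoint, all concepts of the other classes.
-/

section

variable {X : Type*} [DecidableEq X] {𝒞 𝓕 : Finset (Finset X)} {C D : Finset X} {x : X} {k : ℕ}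

theorem IsTeachingSet.anti (h𝓕 : 𝓕 ⊆ 𝒞) (hD : IsTeachingSet 𝒞 C D) : IsTeachingSet 𝓕 C D :=
  fun C' hC' => hD C' (h𝓕 hC')

theorem IsTeachingSet.insert_of_forall_mem (hx : x ∈ C) (h𝓕 : ∀ C' ∈ 𝒞, x ∈ C' → C' ∈ 𝓕)
    (hD : IsTeachingSet 𝓕 C D) : IsTeachingSet 𝒞 C (insert x D) := by
  intro C' hC' hne
  by_cases hx' : x ∈ C'
  · obtain ⟨y, hy, hyC⟩ := hD C' (h𝓕 C' hC' hx') hne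
    exact ⟨y, Finset.mem_insert_of_mem hy, hyC⟩
  · exact ⟨x, Finset.mem_insert_self x D, fun h => hx' (h.mpr hx)⟩

theorem isTeachingSet_union_sup (𝒞 : Finset (Finset X)) (C : Finset X) :
    IsTeachingSet 𝒞 C (C ∪ 𝒞.sup id) := by
  intro C' hC' hne
  by_contra! hagree
  have hC'sub : C' ⊆ C ∪ 𝒞.sup id :=
    (Finset.le_sup (f := id) hC').trans Finset.subset_union_right
  exact hne <| Finset.ext fun x =>
    ⟨fun hx => (hagree x (hC'sub hx)).mp hx,
      fun hx => (hagree x (Finset.mem_union_left _ hx)).mpr hx⟩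

theorem IsTeachingSet.td_le_card (hD : IsTeachingSet 𝒞 C D) : TD 𝒞 C ≤ D.card :=
  Nat.sInf_le ⟨D, hD, rfl⟩

theorem exists_isTeachingSet_card_eq_td (𝒞 : Finset (Finset X)) (C : Finset X) :
    ∃ D, IsTeachingSet 𝒞 C D ∧ D.card = TD 𝒞 C :=
  Nat.sInf_mem (s := {n | ∃ D, IsTeachingSet 𝒞 C D ∧ D.card = n})
    ⟨_, _, isTeachingSet_union_sup 𝒞 C, rfl⟩

theorem td_mono (h𝓕 : 𝓕 ⊆ 𝒞) (C : Finset X) : TD 𝓕 C ≤ TD 𝒞 C := by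
  obtain ⟨D, hD, hcard⟩ := exists_isTeachingSet_card_eq_td 𝒞 C
  exact hcard ▸ (hD.anti h𝓕).td_le_card

theorem td_le_td_add_one (hx : x ∈ C) (h𝓕 : ∀ C' ∈ 𝒞, x ∈ C' → C' ∈ 𝓕) :
    TD 𝒞 C ≤ TD 𝓕 C + 1 := by
  obtain ⟨D, hD, hcard⟩ := exists_isTeachingSet_card_eq_td 𝓕 C
  calc
    TD 𝒞 C ≤ (insert x D).card := (hD.insert_of_forall_mem hx h𝓕).td_le_card
    _ ≤ D.card + 1 := Finset.card_insert_le x D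
    _ = TD 𝓕 C + 1 := by rw [hcard]

theorem tdmin_le_td (hC : C ∈ 𝒞) : TDmin 𝒞 ≤ TD 𝒞 C :=
  Nat.sInf_le ⟨C, hC, rfl⟩

theorem exists_mem_td_eq_tdmin (h𝒞 : 𝒞.Nonempty) : ∃ C ∈ 𝒞, TD 𝒞 C = TDmin 𝒞 :=
  Nat.sInf_mem (s := {n | ∃ C ∈ 𝒞, TD 𝒞 C = n}) (h𝒞.imp' (TD 𝒞) fun C hC => ⟨C, hC, rfl⟩)

theorem tdmin_eq_zero_of_subset_singleton (h𝒞 : 𝒞 ⊆ {C}) : TDmin 𝒞 = 0 := by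
  rcases Finset.subset_singleton_iff.mp h𝒞 with rfl | rfl
  · simp [TDmin]
  · have hempty : IsTeachingSet {C} C ∅ :=
      fun C' hC' hne => absurd (Finset.mem_singleton.mp hC') hne
    exact Nat.le_zero.mp <| (tdmin_le_td (Finset.mem_singleton_self C)).trans hempty.td_le_card

theorem tdmin_le_tdmin_add_one (hne : 𝓕.Nonempty) (h𝓕 : 𝓕 ⊆ 𝒞)
    (hmark : ∀ C ∈ 𝓕, ∃ x ∈ C, ∀ C' ∈ 𝒞, x ∈ C' → C' ∈ 𝓕) : TDmin 𝒞 ≤ TDmin 𝓕 + 1 := by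
  obtain ⟨C, hC, hmin⟩ := exists_mem_td_eq_tdmin hne
  obtain ⟨x, hx, hx𝓕⟩ := hmark C hC
  calc
    TDmin 𝒞 ≤ TD 𝒞 C := tdmin_le_td (h𝓕 hC)
    _ ≤ TD 𝓕 C + 1 := td_le_td_add_one hx hx𝓕
    _ = TDmin 𝓕 + 1 := by rw [hmin]

/-- The class `𝒞_min` of concepts of minimum teaching dimension in `𝒞`, which is the class removed
from `𝒞` by one stage of the recursion for `RTD`. -/
noncomputable def TDminClass (𝒞 : Finset (Finset X)) : Finset (Finset X) :=
  𝒞.filter fun C => TD 𝒞 C = TDmin 𝒞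

theorem mem_tdminClass : C ∈ TDminClass 𝒞 ↔ C ∈ 𝒞 ∧ TD 𝒞 C = TDmin 𝒞 :=
  Finset.mem_filter

theorem sdiff_tdminClass_ssubset (h𝒞 : 𝒞.Nonempty) : 𝒞 \ TDminClass 𝒞 ⊂ 𝒞 :=
  Finset.sdiff_ssubset (Finset.filter_subset _ _) <|
    (exists_mem_td_eq_tdmin h𝒞).imp fun _ => mem_tdminClass.mpr

theorem rtd_empty : RTD (∅ : Finset (Finset X)) = 0 := by
  rw [RTD, dif_pos (Finset.filter_empty _).symm]
  exact tdmin_eq_zero_of_subset_singleton (Finset.empty_subset {∅})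

theorem rtd_eq_max (𝒞 : Finset (Finset X)) :
    RTD 𝒞 = max (TDmin 𝒞) (RTD (𝒞 \ TDminClass 𝒞)) := by
  rw [RTD]
  split_ifs with hmin
  · have hsdiff : 𝒞 \ TDminClass 𝒞 = ∅ := Finset.sdiff_eq_empty_iff_subset.mpr hmin.subset
    rw [hsdiff, rtd_empty, max_eq_left (Nat.zero_le _)]
  · rfl

theorem tdmin_le_rtd_of_subset (h𝓕 : 𝓕 ⊆ 𝒞) : TDmin 𝓕 ≤ RTD 𝒞 := by
  rcases 𝓕.eq_empty_or_nonempty with rfl | hne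
  · exact (tdmin_eq_zero_of_subset_singleton (Finset.empty_subset {∅})).trans_le (Nat.zero_le _)
  induction 𝒞 using Finset.strongInduction with
  | H 𝒞 ih =>
    rw [rtd_eq_max]
    by_cases hdisj : Disjoint 𝓕 (TDminClass 𝒞)
    · exact le_max_of_le_right <|
        ih _ (sdiff_tdminClass_ssubset (hne.mono h𝓕)) (Finset.subset_sdiff.mpr ⟨h𝓕, hdisj⟩)
    · obtain ⟨C, hC𝓕, hCmin⟩ := Finset.not_disjoint_iff.mp hdisj
      refine le_max_of_le_left ?_
      calc
        TDmin 𝓕 ≤ TD 𝓕 C := tdmin_le_td hC𝓕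
        _ ≤ TD 𝒞 C := td_mono h𝓕 C
        _ = TDmin 𝒞 := (mem_tdminClass.mp hCmin).2

theorem rtd_le_iff_forall_subset : RTD 𝒞 ≤ k ↔ ∀ 𝓕 ⊆ 𝒞, TDmin 𝓕 ≤ k := by
  refine ⟨fun h 𝓕 h𝓕 => (tdmin_le_rtd_of_subset h𝓕).trans h, fun h => ?_⟩
  induction 𝒞 using Finset.strongInduction with
  | H 𝒞 ih =>
    rcases 𝒞.eq_empty_or_nonempty with rfl | hne
    · exact rtd_empty.trans_le (Nat.zero_le k)
    · rw [rtd_eq_max]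
      exact max_le (h 𝒞 subset_rfl) <|
        ih _ (sdiff_tdminClass_ssubset hne) fun 𝓕 h𝓕 => h 𝓕 (h𝓕.trans Finset.sdiff_subset)

theorem rtd_mono : Monotone (RTD : Finset (Finset X) → ℕ) :=
  fun _ _ h𝓕𝒞 => rtd_le_iff_forall_subset.mpr fun _ h => tdmin_le_rtd_of_subset (h.trans h𝓕𝒞)

end

section

variable {ι X : Type*} [DecidableEq X] {s : Finset ι} {𝒳 : ι → Set X} {𝒞 : ι → Finset (Finset X)}

theorem sup_rtd_le_rtd_biUnion (s : Finset ι) (𝒞 : ι → Finset (Finset X)) :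
    s.sup (fun i => RTD (𝒞 i)) ≤ RTD (s.biUnion 𝒞) :=
  Finset.sup_le fun _ hi => rtd_mono (Finset.subset_biUnion_of_mem 𝒞 hi)

theorem mem_of_mem_biUnion_of_common_mem (hdisj : (s : Set ι).PairwiseDisjoint 𝒳)
    (hdom : ∀ i ∈ s, ∀ C ∈ 𝒞 i, (C : Set X) ⊆ 𝒳 i) {i : ι} (hi : i ∈ s) {C C' : Finset X}
    (hC : C ∈ 𝒞 i) (hC' : C' ∈ s.biUnion 𝒞) {x : X} (hx : x ∈ C) (hx' : x ∈ C') : C' ∈ 𝒞 i := by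
  obtain ⟨j, hj, hC'j⟩ := Finset.mem_biUnion.mp hC'
  rwa [hdisj.elim_set hi hj x (hdom i hi C hC hx) (hdom j hj C' hC'j hx')]

theorem tdmin_le_rtd_add_one_of_subset_biUnion (hdisj : (s : Set ι).PairwiseDisjoint 𝒳)
    (hdom : ∀ i ∈ s, ∀ C ∈ 𝒞 i, (C : Set X) ⊆ 𝒳 i) {𝓕 : Finset (Finset X)}
    (h𝓕 : 𝓕 ⊆ s.biUnion 𝒞) {i : ι} (hi : i ∈ s) {C₀ : Finset X} (hC₀ : C₀ ∈ 𝓕)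
    (hC₀i : C₀ ∈ 𝒞 i) (hC₀ne : C₀.Nonempty) : TDmin 𝓕 ≤ RTD (𝒞 i) + 1 := by
  let 𝓖 := 𝓕.filter fun C => C ∈ 𝒞 i ∧ C.Nonempty
  have h𝓖ne : 𝓖.Nonempty := ⟨C₀, Finset.mem_filter.mpr ⟨hC₀, hC₀i, hC₀ne⟩⟩
  have h𝓖𝒞 : 𝓖 ⊆ 𝒞 i := fun C hC => (Finset.mem_filter.mp hC).2.1
  have hmark : ∀ C ∈ 𝓖, ∃ x ∈ C, ∀ C' ∈ 𝓕, x ∈ C' → C' ∈ 𝓖 := by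
    intro C hC
    obtain ⟨-, hCi, x, hx⟩ := Finset.mem_filter.mp hC
    exact ⟨x, hx, fun C' hC' hx' => Finset.mem_filter.mpr ⟨hC',
      mem_of_mem_biUnion_of_common_mem hdisj hdom hi hCi (h𝓕 hC') hx hx', x, hx'⟩⟩
  calc
    TDmin 𝓕 ≤ TDmin 𝓖 + 1 := tdmin_le_tdmin_add_one h𝓖ne (Finset.filter_subset _ _) hmark
    _ ≤ RTD (𝒞 i) + 1 := Nat.add_le_add_right (tdmin_le_rtd_of_subset h𝓖𝒞) 1

theorem rtd_biUnion_le_one_add_sup (hdisj : (s : Set ι).PairwiseDisjoint 𝒳)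
    (hdom : ∀ i ∈ s, ∀ C ∈ 𝒞 i, (C : Set X) ⊆ 𝒳 i) :
    RTD (s.biUnion 𝒞) ≤ 1 + s.sup (fun i => RTD (𝒞 i)) := by
  refine rtd_le_iff_forall_subset.mpr fun 𝓕 h𝓕 => ?_
  by_cases hempty : 𝓕 ⊆ {∅}
  · exact (tdmin_eq_zero_of_subset_singleton hempty).trans_le (Nat.zero_le _)
  · obtain ⟨C, hC, hCne⟩ := Finset.not_subset.mp hempty
    obtain ⟨i, hi, hCi⟩ := Finset.mem_biUnion.mp (h𝓕 hC)
    have hCnonempty : C.Nonempty :=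
      Finset.nonempty_iff_ne_empty.mpr fun h => hCne (Finset.mem_singleton.mpr h)
    calc
      TDmin 𝓕 ≤ RTD (𝒞 i) + 1 :=
        tdmin_le_rtd_add_one_of_subset_biUnion hdisj hdom h𝓕 hi hC hCi hCnonempty
      _ ≤ 1 + s.sup (fun i => RTD (𝒞 i)) := by
        rw [add_comm]
        exact Nat.add_le_add_left (Finset.le_sup (f := fun i => RTD (𝒞 i)) hi) 1

theorem rtd_union_disjoint_general (hdisj : (s : Set ι).PairwiseDisjoint 𝒳)
    (hdom : ∀ i ∈ s, ∀ C ∈ 𝒞 i, (C : Set X) ⊆ 𝒳 i) :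
    s.sup (fun i => RTD (𝒞 i)) ≤ RTD (s.biUnion 𝒞) ∧
      RTD (s.biUnion 𝒞) ≤ 1 + s.sup (fun i => RTD (𝒞 i)) :=
  ⟨sup_rtd_le_rtd_biUnion s 𝒞, rtd_biUnion_le_one_add_sup hdisj hdom⟩

end

/-- If `𝒞_1, …, 𝒞_r` are nonempty concept classes over pairwise
disjoint finite domains `𝒳_1, …, 𝒳_r`, then
`max_i RTD(𝒞_i) ≤ RTD(𝒞_1 ∪ … ∪ 𝒞_r) ≤ 1 + max_i RTD(𝒞_i)`. -/
theorem rtd_union_disjoint {X : Type*} [Fintype X] [DecidableEq X]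
    {r : ℕ} (hr : 1 ≤ r)
    (𝒳 : Fin r → Finset X) (𝒞 : Fin r → Finset (Finset X))
    (hne : ∀ i, (𝒞 i).Nonempty)
    (hdisj : ∀ i j, i ≠ j → Disjoint (𝒳 i) (𝒳 j))
    (hdom : ∀ i, ∀ C ∈ 𝒞 i, C ⊆ 𝒳 i) :
    Finset.univ.sup (fun i => RTD (𝒞 i)) ≤ RTD (Finset.univ.biUnion 𝒞) ∧
      RTD (Finset.univ.biUnion 𝒞) ≤ 1 + Finset.univ.sup (fun i => RTD (𝒞 i)) :=
  rtd_union_disjoint_general (fun i _ j _ hij => Finset.disjoint_coe.mpr (hdisj i j hij))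
    fun i _ C hC => Finset.coe_subset.mpr (hdom i C hC)
end
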